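/- Let d ≥ 1. There exists a constant C > 0 (depending only on d) such that for all smooth compactly supported functions f, g : ℝ^d → ℝ, the sum over all multi-indices α with 0 < |α| ≤ 3 of the L² norms of the commutators D^α(g f) − g D^α f satisfies Σ_{0<|α|≤3} ‖D^α(g f) − g D^α f‖_{L²(ℝ^d)} ≤ C ( ‖f‖_{H²} ‖∇g‖_{L^∞} + ‖f‖_{L^∞} ‖g‖_{H³} ). -/

import Mathlib

/-! The Leibniz rule writes `D^α(g f) - g D^α f` as a sum of at most seven products
`D^β g · D^γ f` with `|β| ≥ 1` and `|β| + |γ| ≤ 3`. If `|β| = 1` or `γ = 0`, Hölder's inequality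
with exponents `∞` and `2` is enough. The only remaining terms are `∂ⱼ∂ᵢg · ∂ₖf`. For these,
integration by parts and Cauchy–Schwarz give the Gagliardo–Nirenberg inequality
`∫ (∂ₖu)⁴ ≤ 9 ‖u‖²_∞ ∫ (∂ₖ²u)²` (`gagliardo_nirenberg`); it is applied to `u = f` and to `u = ∂ᵢg`,
and the two are combined by Cauchy–Schwarz and `√(ab) ≤ a + b` (`eLpNorm_mixed_le`).

Multi-indices are handled through lists of directions: partial derivatives of smooth functions
commute, so the iterated derivative along a list depends only on the multiplicities in the list
(`listDeriv_eq_mderiv`). -/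

open MeasureTheory

/-- The partial derivative `∂ᵢ f` of a function `f : ℝᵈ → ℝ`. -/
noncomputable def pderiv' {d : ℕ} (i : Fin d) (f : EuclideanSpace ℝ (Fin d) → ℝ) :
    EuclideanSpace ℝ (Fin d) → ℝ :=
  fun x => fderiv ℝ f x (EuclideanSpace.single i 1)

/-- The multi-index derivative `D^α f` for a multi-index `α : Fin d → ℕ`. -/
noncomputable def mderiv {d : ℕ} (α : Fin d → ℕ) (f : EuclideanSpace ℝ (Fin d) → ℝ) :
    EuclideanSpace ℝ (Fin d) → ℝ :=
  (List.finRange d).foldr (fun i g => (pderiv' i)^[α i] g) f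

/-- The (nonhomogeneous) Sobolev norm `‖f‖_{H^m} = (∑_{|α| ≤ m} ‖D^α f‖_{L²}²)^{1/2}`.
Multi-indices of degree at most `m` are parametrized by functions `Fin d → Fin (m+1)`. -/
noncomputable def sobNorm {d : ℕ} (m : ℕ) (f : EuclideanSpace ℝ (Fin d) → ℝ) : ENNReal :=
  (∑ α ∈ Finset.univ.filter (fun α : Fin d → Fin (m + 1) => ∑ i, (α i : ℕ) ≤ m),
      (eLpNorm (mderiv (fun i => (α i : ℕ)) f) 2 volume) ^ 2) ^ (1 / 2 : ℝ)

/-- `‖∇^k f‖_{L^∞} = max_{|α| = k} ‖D^α f‖_{L^∞}`. -/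
noncomputable def gradSupNorm {d : ℕ} (k : ℕ) (f : EuclideanSpace ℝ (Fin d) → ℝ) : ENNReal :=
  (Finset.univ.filter (fun α : Fin d → Fin (k + 1) => ∑ i, (α i : ℕ) = k)).sup
    (fun α => eLpNorm (mderiv (fun i => (α i : ℕ)) f) ⊤ volume)

/-! ### Test functions and their partial derivatives -/

/-- Smooth compactly supported real functions on `ℝᵈ`. -/
structure IsTest {d : ℕ} (f : EuclideanSpace ℝ (Fin d) → ℝ) : Prop where
  smooth : ContDiff ℝ (⊤ : ℕ∞) f
  supp : HasCompactSupport f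

section Calculus

variable {d : ℕ} {f g : EuclideanSpace ℝ (Fin d) → ℝ}

lemma IsTest.pderiv (hf : IsTest f) (i : Fin d) : IsTest (pderiv' i f) :=
  ⟨(hf.smooth.fderiv_right (m := (⊤ : ℕ∞)) (by simp)).clm_apply contDiff_const,
    hf.supp.fderiv_apply ℝ _⟩

lemma IsTest.mul (hf : IsTest f) (hg : IsTest g) : IsTest (f * g) :=
  ⟨hf.smooth.mul hg.smooth, hf.supp.mul_right⟩

lemma IsTest.add (hf : IsTest f) (hg : IsTest g) : IsTest (f + g) :=
  ⟨hf.smooth.add hg.smooth, hf.supp.add hg.supp⟩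

lemma IsTest.differentiableAt (hf : IsTest f) (x : EuclideanSpace ℝ (Fin d)) :
    DifferentiableAt ℝ f x :=
  hf.smooth.differentiable (by simp) x

lemma IsTest.integrable (hf : IsTest f) : Integrable f volume :=
  hf.smooth.continuous.integrable_of_hasCompactSupport hf.supp

lemma IsTest.memLp (hf : IsTest f) (p : ENNReal) : MemLp f p volume :=
  hf.smooth.continuous.memLp_of_hasCompactSupport hf.supp

lemma IsTest.aesm (hf : IsTest f) : AEStronglyMeasurable f volume :=
  hf.smooth.continuous.aestronglyMeasurable

lemma pderiv_mul (hf : IsTest f) (hg : IsTest g) (i : Fin d) :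
    pderiv' i (f * g) = pderiv' i f * g + f * pderiv' i g := by
  funext x
  simp only [pderiv', Pi.add_apply, Pi.mul_apply]
  rw [fderiv_mul (hf.differentiableAt x) (hg.differentiableAt x)]
  simp
  ring

lemma pderiv_add (hf : IsTest f) (hg : IsTest g) (i : Fin d) :
    pderiv' i (f + g) = pderiv' i f + pderiv' i g := by
  funext x
  simp only [pderiv', Pi.add_apply]
  rw [fderiv_add (hf.differentiableAt x) (hg.differentiableAt x)]
  simp

lemma pderiv_pderiv (hf : ContDiff ℝ (⊤ : ℕ∞) f) (i j : Fin d)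
    (x : EuclideanSpace ℝ (Fin d)) :
    pderiv' i (pderiv' j f) x
      = fderiv ℝ (fderiv ℝ f) x (EuclideanSpace.single i 1) (EuclideanSpace.single j 1) := by
  have h : DifferentiableAt ℝ (fderiv ℝ f) x :=
    (hf.fderiv_right (m := (⊤ : ℕ∞)) (by simp)).differentiable (by simp) x
  unfold pderiv'
  rw [fderiv_clm_apply h (differentiableAt_const _)]
  simp

lemma pderiv_comm (hf : ContDiff ℝ (⊤ : ℕ∞) f) (i j : Fin d) :
    pderiv' i (pderiv' j f) = pderiv' j (pderiv' i f) := by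
  funext x
  rw [pderiv_pderiv hf, pderiv_pderiv hf]
  have hs : IsSymmSndFDerivAt ℝ f x := hf.contDiffAt.isSymmSndFDerivAt (by
    rw [minSmoothness_of_isRCLikeNormedField]
    exact WithTop.coe_le_coe.2 (le_top : (2 : ℕ∞) ≤ ⊤))
  exact hs _ _

/-! ### Iterated derivatives along lists of directions -/

/-- The derivative `∂_{i₁} ⋯ ∂_{iₙ} f` along the list of directions `[i₁, …, iₙ]`. -/
noncomputable def listDeriv (L : List (Fin d)) (f : EuclideanSpace ℝ (Fin d) → ℝ) :
    EuclideanSpace ℝ (Fin d) → ℝ :=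
  L.foldr pderiv' f

lemma IsTest.listDeriv (hf : IsTest f) (L : List (Fin d)) : IsTest (listDeriv L f) := by
  induction L with
  | nil => exact hf
  | cons i L ih => exact ih.pderiv i

/-- The sorted list of directions in which `i` occurs `α i` times. -/
def dirList (α : Fin d → ℕ) : List (Fin d) :=
  (List.finRange d).flatMap fun i => List.replicate (α i) i

lemma mderiv_eq_listDeriv (α : Fin d → ℕ) (f : EuclideanSpace ℝ (Fin d) → ℝ) :
    mderiv α f = listDeriv (dirList α) f := by
  have hrep : ∀ (n : ℕ) (i : Fin d) (u : EuclideanSpace ℝ (Fin d) → ℝ),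
      (pderiv' i)^[n] u = listDeriv (List.replicate n i) u := by
    intro n i u
    induction n with
    | zero => rfl
    | succ n ih =>
      rw [Function.iterate_succ_apply', ih]
      rfl
  unfold mderiv dirList
  induction List.finRange d with
  | nil => rfl
  | cons i L ih =>
    rw [List.foldr_cons, ih, hrep, List.flatMap_cons]
    simp only [listDeriv, List.foldr_append]

lemma length_dirList (α : Fin d → ℕ) : (dirList α).length = ∑ i, α i := by
  rw [dirList, List.length_flatMap, Fin.sum_univ_def]
  simp

lemma dirList_count_perm (L : List (Fin d)) : L.Perm (dirList fun i => L.count i) := by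
  rw [List.perm_iff_count]
  intro a
  have h : (List.count a ∘ fun i => List.replicate (List.count i L) i)
      = fun i => if i = a then List.count i L else 0 := by
    funext i
    simp [List.count_replicate]
  rw [dirList, List.count_flatMap, h, ← Fin.sum_univ_def]
  simp

lemma sum_count_eq_length (L : List (Fin d)) : ∑ i, L.count i = L.length := by
  rw [← length_dirList, ← (dirList_count_perm L).length_eq]

lemma listDeriv_perm (hf : IsTest f) {L L' : List (Fin d)} (h : L.Perm L') :
    listDeriv L f = listDeriv L' f := by
  induction h with
  | nil => rfl
  | cons i _ ih => exact congrArg (pderiv' i) ih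
  | swap i j L => exact pderiv_comm (hf.listDeriv L).smooth j i
  | trans _ _ ih₁ ih₂ => exact ih₁.trans ih₂

lemma listDeriv_eq_mderiv (hf : IsTest f) (L : List (Fin d)) :
    listDeriv L f = mderiv (fun i => L.count i) f := by
  rw [mderiv_eq_listDeriv]
  exact listDeriv_perm hf (dirList_count_perm L)

lemma eLpNorm_listDeriv_le_sobNorm (hf : IsTest f) {m : ℕ} (L : List (Fin d))
    (hL : L.length ≤ m) : eLpNorm (listDeriv L f) 2 volume ≤ sobNorm m f := by
  have hlt : ∀ i, L.count i < m + 1 := fun i =>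
    Nat.lt_succ_of_le (List.count_le_length.trans hL)
  have hle := Finset.single_le_sum
    (s := Finset.univ.filter (fun α : Fin d → Fin (m + 1) => ∑ i, (α i : ℕ) ≤ m))
    (f := fun α => (eLpNorm (mderiv (fun i => (α i : ℕ)) f) 2 volume) ^ 2)
    (fun _ _ => zero_le) (a := fun i => ⟨L.count i, hlt i⟩)
    (by simpa [sum_count_eq_length] using hL)
  simp only [← listDeriv_eq_mderiv hf L] at hle
  calc eLpNorm (listDeriv L f) 2 volume
      = ((eLpNorm (listDeriv L f) 2 volume) ^ 2) ^ (1 / 2 : ℝ) := by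
        rw [← ENNReal.rpow_natCast, ← ENNReal.rpow_mul]
        norm_num
    _ ≤ _ := ENNReal.rpow_le_rpow hle (by norm_num)

lemma eLpNorm_pderiv_le_gradSupNorm (hf : IsTest f) (i : Fin d) :
    eLpNorm (pderiv' i f) ⊤ volume ≤ gradSupNorm 1 f := by
  have hlt : ∀ j, [i].count j < 1 + 1 := fun j => Nat.lt_succ_of_le List.count_le_length
  have hle := Finset.le_sup
    (s := Finset.univ.filter (fun α : Fin d → Fin (1 + 1) => ∑ i, (α i : ℕ) = 1))
    (f := fun α => eLpNorm (mderiv (fun i => (α i : ℕ)) f) ⊤ volume)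
    (b := fun j => ⟨[i].count j, hlt j⟩)
    (by simp [sum_count_eq_length])
  simp only [← listDeriv_eq_mderiv hf [i]] at hle
  exact hle

/-! ### The Gagliardo–Nirenberg inequality -/

lemma IsTest.sq_integral_mul_le (hf : IsTest f) (hg : IsTest g) :
    (∫ x, f x * g x) ^ 2 ≤ (∫ x, f x ^ 2) * ∫ x, g x ^ 2 := by
  have hff : Integrable (fun x => f x ^ 2) := by simpa [sq] using! (hf.mul hf).integrable
  have hgg : Integrable (fun x => g x ^ 2) := by simpa [sq] using! (hg.mul hg).integrable
  have hfg : Integrable (fun x => f x * g x) := (hf.mul hg).integrable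
  -- The quadratic polynomial `t ↦ ∫ (f + t g)²` is nonnegative.
  have hd : discrim (∫ x, g x ^ 2) (2 * ∫ x, f x * g x) (∫ x, f x ^ 2) ≤ 0 := by
    refine discrim_le_zero fun t => ?_
    have h : ∫ x, (f x + t * g x) ^ 2
        = (∫ x, g x ^ 2) * (t * t) + (2 * ∫ x, f x * g x) * t + ∫ x, f x ^ 2 := by
      have e : (fun x => (f x + t * g x) ^ 2)
          = fun x => (t * t) * g x ^ 2 + (2 * t) * (f x * g x) + f x ^ 2 := by
        funext x
        ring
      have h1 : Integrable (fun x => (t * t) * g x ^ 2) := hgg.const_mul _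
      have h2 : Integrable (fun x => (2 * t) * (f x * g x)) := hfg.const_mul _
      have h12 : Integrable (fun x => (t * t) * g x ^ 2 + (2 * t) * (f x * g x)) := h1.add h2
      rw [e, integral_add h12 hff, integral_add h1 h2, integral_const_mul, integral_const_mul]
      ring
    rw [← h]
    exact integral_nonneg fun x => sq_nonneg _
  unfold discrim at hd
  nlinarith

lemma integral_pderiv_pow_four (hf : IsTest f) (i : Fin d) :
    ∫ x, pderiv' i f x ^ 4
      = -∫ x, pderiv' i f x ^ 2 * (3 * (f x * pderiv' i (pderiv' i f) x)) := by
  have h1 := hf.pderiv i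
  have h2 := h1.pderiv i
  have hcube : IsTest (pderiv' i f * (pderiv' i f * pderiv' i f)) := h1.mul (h1.mul h1)
  have hd : pderiv' i (pderiv' i f * (pderiv' i f * pderiv' i f))
      = fun x => 3 * (pderiv' i f x ^ 2 * pderiv' i (pderiv' i f) x) := by
    rw [pderiv_mul h1 (h1.mul h1), pderiv_mul h1 h1]
    funext x
    simp only [Pi.add_apply, Pi.mul_apply]
    ring
  have hparts := integral_mul_fderiv_eq_neg_fderiv_mul_of_integrable (μ := volume)
    (f := pderiv' i f * (pderiv' i f * pderiv' i f)) (g := f) (v := EuclideanSpace.single i 1)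
    ((hcube.pderiv i).mul hf).integrable (hcube.mul h1).integrable (hcube.mul hf).integrable
    (fun x _ => hcube.differentiableAt x) (fun x _ => hf.differentiableAt x)
  have e1 : (fun x => pderiv' i f x ^ 4) = fun x =>
      (pderiv' i f * (pderiv' i f * pderiv' i f)) x * fderiv ℝ f x (EuclideanSpace.single i 1) := by
    funext x
    change _ = pderiv' i f x * (pderiv' i f x * pderiv' i f x) * pderiv' i f x
    ring
  have e2 : (fun x => pderiv' i f x ^ 2 * (3 * (f x * pderiv' i (pderiv' i f) x))) = fun x =>
      fderiv ℝ (pderiv' i f * (pderiv' i f * pderiv' i f)) x (EuclideanSpace.single i 1) * f x := by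
    funext x
    change _ = pderiv' i (pderiv' i f * (pderiv' i f * pderiv' i f)) x * f x
    rw [hd]
    ring
  rw [e1, e2, hparts]

lemma gagliardo_nirenberg (hf : IsTest f) (i : Fin d) {M : ℝ} (hM : ∀ᵐ x, |f x| ≤ M) :
    ∫ x, pderiv' i f x ^ 4 ≤ 9 * M ^ 2 * ∫ x, pderiv' i (pderiv' i f) x ^ 2 := by
  have h1 := hf.pderiv i
  have h2 := h1.pderiv i
  have hfh := hf.mul h2
  have h3 := hfh.add (hfh.add hfh)
  have hcs := (h1.mul h1).sq_integral_mul_le h3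
  have e1 : ∀ x, (pderiv' i f * pderiv' i f) x *
      (f * pderiv' i (pderiv' i f) + (f * pderiv' i (pderiv' i f)
        + f * pderiv' i (pderiv' i f))) x
      = pderiv' i f x ^ 2 * (3 * (f x * pderiv' i (pderiv' i f) x)) := by
    intro x
    simp only [Pi.add_apply, Pi.mul_apply]
    ring
  have e2 : ∀ x, (pderiv' i f * pderiv' i f) x ^ 2 = pderiv' i f x ^ 4 := by
    intro x
    simp only [Pi.mul_apply]
    ring
  have hX := integral_pderiv_pow_four hf i
  have hX0 : 0 ≤ ∫ x, pderiv' i f x ^ 4 := integral_nonneg fun x => by positivity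
  have hY0 : 0 ≤ ∫ x, pderiv' i (pderiv' i f) x ^ 2 := integral_nonneg fun x => sq_nonneg _
  have hW : ∫ x, (f * pderiv' i (pderiv' i f) + (f * pderiv' i (pderiv' i f)
        + f * pderiv' i (pderiv' i f))) x ^ 2
      ≤ 9 * M ^ 2 * ∫ x, pderiv' i (pderiv' i f) x ^ 2 := by
    rw [← integral_const_mul]
    refine integral_mono_ae ?_ ?_ ?_
    · simpa [sq] using! (h3.mul h3).integrable
    · refine Integrable.const_mul ?_ _
      simpa [sq] using! (h2.mul h2).integrable
    · filter_upwards [hM] with x hx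
      have hsq : f x ^ 2 ≤ M ^ 2 := sq_le_sq' (by linarith [neg_abs_le (f x)])
        ((le_abs_self _).trans hx)
      simp only [Pi.add_apply, Pi.mul_apply]
      nlinarith [mul_le_mul_of_nonneg_right hsq (sq_nonneg (pderiv' i (pderiv' i f) x))]
  simp only [e1, e2] at hcs
  have hI : (∫ x, pderiv' i f x ^ 2 * (3 * (f x * pderiv' i (pderiv' i f) x))) ^ 2
      = (∫ x, pderiv' i f x ^ 4) ^ 2 := by
    rw [hX]
    ring
  rw [hI] at hcs
  rcases hX0.eq_or_lt with h0 | h0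
  · rw [← h0]
    positivity
  · have := hcs.trans (mul_le_mul_of_nonneg_left hW hX0)
    rw [sq] at this
    exact le_of_mul_le_mul_left this h0

/-! ### Bounds for the products in the Leibniz expansion -/

lemma eLpNorm_two_eq (hf : IsTest f) :
    eLpNorm f 2 volume = ENNReal.ofReal (√(∫ x, f x ^ 2)) := by
  rw [(hf.memLp 2).eLpNorm_eq_integral_rpow_norm (by simp) (by simp), Real.sqrt_eq_rpow]
  simp

lemma IsTest.ae_abs_le (hf : IsTest f) :
    ∀ᵐ x, |f x| ≤ (eLpNorm f ⊤ volume).toReal := by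
  have h : ∀ᵐ x, ‖f x‖ₑ ≤ eLpNorm f ⊤ volume := by
    rw [eLpNorm_exponent_top]
    exact ae_le_eLpNormEssSup
  filter_upwards [h] with x hx
  have := ENNReal.toReal_mono (hf.memLp ⊤).eLpNorm_ne_top hx
  simpa using this

/-- The product of two first derivatives, estimated by pairing the sup norm of each function with
the second derivative of the other. -/
lemma eLpNorm_mixed_le (hf : IsTest f) (hg : IsTest g) (j k : Fin d) :
    eLpNorm (pderiv' j g * pderiv' k f) 2 volume
      ≤ 3 * (eLpNorm (pderiv' k (pderiv' k f)) 2 volume * eLpNorm g ⊤ volume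
        + eLpNorm f ⊤ volume * eLpNorm (pderiv' j (pderiv' j g)) 2 volume) := by
  have hf1 := hf.pderiv k
  have hg1 := hg.pderiv j
  have hf2 := hf1.pderiv k
  have hg2 := hg1.pderiv j
  have gnf := gagliardo_nirenberg hf k hf.ae_abs_le
  have gng := gagliardo_nirenberg hg j hg.ae_abs_le
  have hcs := (hg1.mul hg1).sq_integral_mul_le (hf1.mul hf1)
  have e1 : ∀ x, (pderiv' j g * pderiv' j g) x * (pderiv' k f * pderiv' k f) x
      = (pderiv' j g * pderiv' k f) x ^ 2 := by
    intro x
    simp only [Pi.mul_apply]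
    ring
  have e2 : ∀ (u : EuclideanSpace ℝ (Fin d) → ℝ) x, (u * u) x ^ 2 = u x ^ 4 := by
    intro u x
    simp only [Pi.mul_apply]
    ring
  simp only [e1, e2] at hcs
  have hPf : ENNReal.ofReal (eLpNorm f ⊤ volume).toReal = eLpNorm f ⊤ volume :=
    ENNReal.ofReal_toReal (hf.memLp ⊤).eLpNorm_ne_top
  have hPg : ENNReal.ofReal (eLpNorm g ⊤ volume).toReal = eLpNorm g ⊤ volume :=
    ENNReal.ofReal_toReal (hg.memLp ⊤).eLpNorm_ne_top
  rw [eLpNorm_two_eq (hg1.mul hf1), eLpNorm_two_eq hf2, eLpNorm_two_eq hg2, ← hPf, ← hPg]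
  have hM0 : 0 ≤ (eLpNorm f ⊤ volume).toReal := ENNReal.toReal_nonneg
  have hN0 : 0 ≤ (eLpNorm g ⊤ volume).toReal := ENNReal.toReal_nonneg
  generalize (eLpNorm f ⊤ volume).toReal = M at *
  generalize (eLpNorm g ⊤ volume).toReal = N at *
  have hYf : 0 ≤ ∫ x, pderiv' k (pderiv' k f) x ^ 2 := integral_nonneg fun x => sq_nonneg _
  have hYg : 0 ≤ ∫ x, pderiv' j (pderiv' j g) x ^ 2 := integral_nonneg fun x => sq_nonneg _
  have hXf : 0 ≤ ∫ x, pderiv' k f x ^ 4 := integral_nonneg fun x => by positivity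
  have hXg : 0 ≤ ∫ x, pderiv' j g x ^ 4 := integral_nonneg fun x => by positivity
  have hS : 0 ≤ ∫ x, (pderiv' j g * pderiv' k f) x ^ 2 := integral_nonneg fun x => sq_nonneg _
  generalize (∫ x, pderiv' k (pderiv' k f) x ^ 2) = Yf at *
  generalize (∫ x, pderiv' j (pderiv' j g) x ^ 2) = Yg at *
  generalize (∫ x, pderiv' k f x ^ 4) = Xf at *
  generalize (∫ x, pderiv' j g x ^ 4) = Xg at *
  generalize (∫ x, (pderiv' j g * pderiv' k f) x ^ 2) = S at *
  have hy : √Yf ^ 2 = Yf := Real.sq_sqrt hYf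
  have hz : √Yg ^ 2 = Yg := Real.sq_sqrt hYg
  have hy0 := Real.sqrt_nonneg Yf
  have hz0 := Real.sqrt_nonneg Yg
  have key : √S ≤ 3 * (√Yf * N + M * √Yg) := by
    have h1 : S ^ 2 ≤ (9 * ((√Yf * N) * (M * √Yg))) ^ 2 := by
      calc S ^ 2 ≤ Xg * Xf := hcs
        _ ≤ (9 * N ^ 2 * Yg) * (9 * M ^ 2 * Yf) := by gcongr
        _ = (9 * ((√Yf * N) * (M * √Yg))) ^ 2 := by
          nth_rewrite 1 [← hy, ← hz]
          ring
    have h2 : S ≤ 9 * ((√Yf * N) * (M * √Yg)) := by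
      exact (sq_le_sq₀ hS (by positivity)).1 h1
    refine Real.sqrt_le_iff.2 ⟨by positivity, h2.trans ?_⟩
    have ha : 0 ≤ √Yf * N := by positivity
    have hb : 0 ≤ M * √Yg := by positivity
    nlinarith [mul_nonneg ha hb]
  calc ENNReal.ofReal √S ≤ ENNReal.ofReal (3 * (√Yf * N + M * √Yg)) :=
        ENNReal.ofReal_le_ofReal key
    _ = _ := by
      rw [ENNReal.ofReal_mul (by norm_num), ENNReal.ofReal_add (by positivity) (by positivity),
        ENNReal.ofReal_mul hy0, ENNReal.ofReal_mul hM0]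
      simp

lemma eLpNorm_mul_le_top_left (u : EuclideanSpace ℝ (Fin d) → ℝ) (hg : IsTest g) :
    eLpNorm (u * g) 2 volume ≤ eLpNorm u ⊤ volume * eLpNorm g 2 volume := by
  have := eLpNorm_le_eLpNorm_top_mul_eLpNorm (μ := volume) 2 u hg.aesm (fun a b => a * b) 1
    (Filter.Eventually.of_forall fun x => by simp)
  simpa using! this

/-- The right-hand side of the commutator estimate, without the constant. -/
noncomputable def commBound (f g : EuclideanSpace ℝ (Fin d) → ℝ) : ENNReal :=
  sobNorm 2 f * gradSupNorm 1 g + eLpNorm f ⊤ volume * sobNorm 3 g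

lemma eLpNorm_pderiv_mul_listDeriv_le (hf : IsTest f) (hg : IsTest g) (i : Fin d)
    (L : List (Fin d)) (hL : L.length ≤ 2) :
    eLpNorm (pderiv' i g * listDeriv L f) 2 volume ≤ 3 * commBound f g := by
  calc _ ≤ eLpNorm (pderiv' i g) ⊤ volume * eLpNorm (listDeriv L f) 2 volume :=
        eLpNorm_mul_le_top_left _ (hf.listDeriv L)
    _ ≤ gradSupNorm 1 g * sobNorm 2 f :=
        mul_le_mul' (eLpNorm_pderiv_le_gradSupNorm hg i) (eLpNorm_listDeriv_le_sobNorm hf L hL)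
    _ ≤ commBound f g := by
        rw [mul_comm]
        exact le_self_add
    _ ≤ 3 * commBound f g := le_mul_of_one_le_left zero_le (by norm_num)

lemma eLpNorm_listDeriv_mul_le (hg : IsTest g) (L : List (Fin d)) (hL : L.length ≤ 3) :
    eLpNorm (listDeriv L g * f) 2 volume ≤ 3 * commBound f g := by
  calc _ = eLpNorm (f * listDeriv L g) 2 volume := by rw [mul_comm]
    _ ≤ eLpNorm f ⊤ volume * eLpNorm (listDeriv L g) 2 volume :=
        eLpNorm_mul_le_top_left _ (hg.listDeriv L)
    _ ≤ eLpNorm f ⊤ volume * sobNorm 3 g :=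
        mul_le_mul' le_rfl (eLpNorm_listDeriv_le_sobNorm hg L hL)
    _ ≤ commBound f g := le_add_self
    _ ≤ 3 * commBound f g := le_mul_of_one_le_left zero_le (by norm_num)

lemma eLpNorm_pderiv_pderiv_mul_pderiv_le (hf : IsTest f) (hg : IsTest g) (i j k : Fin d) :
    eLpNorm (pderiv' j (pderiv' i g) * pderiv' k f) 2 volume ≤ 3 * commBound f g := by
  refine (eLpNorm_mixed_le hf (hg.pderiv i) j k).trans ?_
  unfold commBound
  gcongr
  · exact eLpNorm_listDeriv_le_sobNorm hf [k, k] (by simp)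
  · exact eLpNorm_pderiv_le_gradSupNorm hg i
  · exact eLpNorm_listDeriv_le_sobNorm hg [j, j, i] (by simp)

/-! ### The commutator along a list of directions -/

lemma eLpNorm_add_le_of_le {u v : EuclideanSpace ℝ (Fin d) → ℝ} (hu : IsTest u) (hv : IsTest v)
    {a b : ENNReal} (ha : eLpNorm u 2 volume ≤ a) (hb : eLpNorm v 2 volume ≤ b) :
    eLpNorm (u + v) 2 volume ≤ a + b :=
  (eLpNorm_add_le hu.aesm hv.aesm (by norm_num)).trans (add_le_add ha hb)

/-- The Leibniz expansion of the commutator has at most seven terms, each at most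
`3 * commBound f g`. -/
lemma eLpNorm_commutator_le (hf : IsTest f) (hg : IsTest g) (L : List (Fin d))
    (hL0 : 0 < L.length) (hL3 : L.length ≤ 3) :
    eLpNorm (listDeriv L (g * f) - g * listDeriv L f) 2 volume ≤ 21 * commBound f g := by
  match L, hL0, hL3 with
  | [i], _, _ =>
    have e : listDeriv [i] (g * f) - g * listDeriv [i] f = pderiv' i g * f := by
      simp only [listDeriv, List.foldr_cons, List.foldr_nil]
      rw [pderiv_mul hg hf]
      ring
    rw [e]
    refine (eLpNorm_pderiv_mul_listDeriv_le hf hg i [] (by simp)).trans ?_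
    gcongr
    norm_num
  | [i, j], _, _ =>
    have e : listDeriv [i, j] (g * f) - g * listDeriv [i, j] f
        = pderiv' i (pderiv' j g) * f + (pderiv' j g * pderiv' i f
          + pderiv' i g * pderiv' j f) := by
      simp only [listDeriv, List.foldr_cons, List.foldr_nil]
      rw [pderiv_mul hg hf, pderiv_add ((hg.pderiv j).mul hf) (hg.mul (hf.pderiv j)),
        pderiv_mul (hg.pderiv j) hf, pderiv_mul hg (hf.pderiv j)]
      ring
    have gi := hg.pderiv i
    have gj := hg.pderiv j
    have fi := hf.pderiv i
    have fj := hf.pderiv j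
    rw [e]
    have h1 := eLpNorm_add_le_of_le (gj.mul fi) (gi.mul fj)
      (eLpNorm_pderiv_mul_listDeriv_le hf hg j [i] (by simp))
      (eLpNorm_pderiv_mul_listDeriv_le hf hg i [j] (by simp))
    have h2 := eLpNorm_add_le_of_le ((gj.pderiv i).mul hf) ((gj.mul fi).add (gi.mul fj))
      (eLpNorm_listDeriv_mul_le hg [i, j] (by simp)) h1
    refine h2.trans ?_
    rw [← add_mul, ← add_mul]
    gcongr
    norm_num
  | [i, j, k], _, _ =>
    have gi := hg.pderiv i
    have gj := hg.pderiv j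
    have gk := hg.pderiv k
    have fi := hf.pderiv i
    have fj := hf.pderiv j
    have fk := hf.pderiv k
    have e : listDeriv [i, j, k] (g * f) - g * listDeriv [i, j, k] f
        = pderiv' i (pderiv' j (pderiv' k g)) * f
          + (pderiv' j (pderiv' k g) * pderiv' i f
          + (pderiv' i (pderiv' k g) * pderiv' j f
          + (pderiv' i (pderiv' j g) * pderiv' k f
          + (pderiv' k g * pderiv' i (pderiv' j f)
          + (pderiv' j g * pderiv' i (pderiv' k f)
          + pderiv' i g * pderiv' j (pderiv' k f)))))) := by
      simp only [listDeriv, List.foldr_cons, List.foldr_nil]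
      rw [pderiv_mul hg hf, pderiv_add (gk.mul hf) (hg.mul fk), pderiv_mul gk hf,
        pderiv_mul hg fk,
        pderiv_add (((gk.pderiv j).mul hf).add (gk.mul fj))
          ((gj.mul fk).add (hg.mul (fk.pderiv j))),
        pderiv_add ((gk.pderiv j).mul hf) (gk.mul fj),
        pderiv_add (gj.mul fk) (hg.mul (fk.pderiv j)),
        pderiv_mul (gk.pderiv j) hf, pderiv_mul gk fj, pderiv_mul gj fk,
        pderiv_mul hg (fk.pderiv j)]
      ring
    rw [e]
    have t1 := ((gk.pderiv j).pderiv i).mul hf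
    have t2 := (gk.pderiv j).mul fi
    have t3 := (gk.pderiv i).mul fj
    have t4 := (gj.pderiv i).mul fk
    have t5 := gk.mul (fj.pderiv i)
    have t6 := gj.mul (fk.pderiv i)
    have t7 := gi.mul (fk.pderiv j)
    have h6 := eLpNorm_add_le_of_le t6 t7
      (eLpNorm_pderiv_mul_listDeriv_le hf hg j [i, k] (by simp))
      (eLpNorm_pderiv_mul_listDeriv_le hf hg i [j, k] (by simp))
    have h5 := eLpNorm_add_le_of_le t5 (t6.add t7)
      (eLpNorm_pderiv_mul_listDeriv_le hf hg k [i, j] (by simp)) h6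
    have h4 := eLpNorm_add_le_of_le t4 (t5.add (t6.add t7))
      (eLpNorm_pderiv_pderiv_mul_pderiv_le hf hg j i k) h5
    have h3 := eLpNorm_add_le_of_le t3 (t4.add (t5.add (t6.add t7)))
      (eLpNorm_pderiv_pderiv_mul_pderiv_le hf hg k i j) h4
    have h2 := eLpNorm_add_le_of_le t2 (t3.add (t4.add (t5.add (t6.add t7))))
      (eLpNorm_pderiv_pderiv_mul_pderiv_le hf hg k j i) h3
    have h1 := eLpNorm_add_le_of_le t1 (t2.add (t3.add (t4.add (t5.add (t6.add t7)))))
      (eLpNorm_listDeriv_mul_le hg [i, j, k] (by simp)) h2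
    refine h1.trans ?_
    simp only [← add_mul]
    gcongr
    norm_num

end Calculus

/-- Commutator estimate:
`∑_{0<|α|≤3} ‖D^α(g f) − g D^α f‖_{L²} ≤ C (‖f‖_{H²} ‖∇g‖_{L^∞} + ‖f‖_{L^∞} ‖g‖_{H³})`. -/
theorem commutator_estimate_one (d : ℕ) (hd : 1 ≤ d) :
    ∃ C : ℝ, 0 < C ∧ ∀ f g : EuclideanSpace ℝ (Fin d) → ℝ,
      ContDiff ℝ (⊤ : ℕ∞) f → HasCompactSupport f →
      ContDiff ℝ (⊤ : ℕ∞) g → HasCompactSupport g →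
      ∑ α ∈ Finset.univ.filter
          (fun α : Fin d → Fin 4 => 0 < ∑ i, (α i : ℕ) ∧ ∑ i, (α i : ℕ) ≤ 3),
        eLpNorm (fun x => mderiv (fun i => (α i : ℕ)) (fun y => g y * f y) x
          - g x * mderiv (fun i => (α i : ℕ)) f x) 2 volume
      ≤ ENNReal.ofReal C *
          (sobNorm 2 f * gradSupNorm 1 g + eLpNorm f ⊤ volume * sobNorm 3 g) := by
  classical
  -- One factor `21` for each multi-index; the summand `1` makes the constant positive.
  refine ⟨((Finset.univ.filter (fun α : Fin d → Fin 4 =>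
    0 < ∑ i, (α i : ℕ) ∧ ∑ i, (α i : ℕ) ≤ 3)).card : ℝ) * 21 + 1, by positivity, ?_⟩
  intro f g hf hfc hg hgc
  have Hf : IsTest f := ⟨hf, hfc⟩
  have Hg : IsTest g := ⟨hg, hgc⟩
  refine (Finset.sum_le_card_nsmul _ _ (21 * commBound f g) ?_).trans ?_
  · intro α hα
    obtain ⟨h0, h3⟩ := (Finset.mem_filter.1 hα).2
    have h := eLpNorm_commutator_le Hf Hg (dirList fun i => (α i : ℕ))
      (by rwa [length_dirList]) (by rwa [length_dirList])
    rw [← mderiv_eq_listDeriv, ← mderiv_eq_listDeriv] at h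
    exact h
  · rw [nsmul_eq_mul, ← mul_assoc]
    change _ ≤ _ * commBound f g
    gcongr
    rw [ENNReal.ofReal_add (by positivity) (by norm_num), ENNReal.ofReal_mul (by positivity),
      ENNReal.ofReal_natCast, ENNReal.ofReal_ofNat]
    exact le_self_add
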